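/- arXiv:1905.05886 — 8 statements merged into one kernel-verified Lean document; each statement's English description precedes it below -/
import Mathlib

section
/- Let A be a skew left brace and let I be a proper strong left ideal of A. Define ρ_x(a) = λ_a(x)' ∘ a ∘ x for a,x ∈ A. Then for every x ∈ A one has λ_x(I) = I, λ_x(A∖I) = A∖I, ρ_x(I) = I and ρ_x(A∖I) = A∖I; consequently the set-theoretic solution (A,r_A) with r_A(a,b) = (λ_a(b), λ_a(b)'∘a∘b) is decomposable as A = I ∪ (A∖I). -/
/-- A skew left brace: `(A,+)` and `(A,∘)` are groups (sharing the same identity `0`)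
such that `a ∘ (b + c) = a ∘ b - a + a ∘ c`.  Here `circ` is the operation `∘` and
`cinv a` is the inverse of `a` in `(A,∘)`. -/
class SkewBrace (A : Type*) extends AddGroup A where
  circ : A → A → A
  cinv : A → A
  circ_assoc : ∀ a b c : A, circ (circ a b) c = circ a (circ b c)
  zero_circ : ∀ a : A, circ 0 a = a
  circ_zero : ∀ a : A, circ a 0 = a
  cinv_circ : ∀ a : A, circ (cinv a) a = 0
  circ_cinv : ∀ a : A, circ a (cinv a) = 0
  compat : ∀ a b c : A, circ a (b + c) = circ a b + -a + circ a c

open SkewBrace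

/-- `lam a b = -a + a ∘ b`. -/
def lam {A : Type*} [SkewBrace A] (a b : A) : A := -a + circ a b

/-- The star operation `a * b = lam a b - b = -a + a ∘ b - b`. -/
def bstar {A : Type*} [SkewBrace A] (a b : A) : A := lam a b - b

/-- `X * Y`: the subgroup of `(A,+)` generated by `{x * y : x ∈ X, y ∈ Y}`. -/
def starSpan {A : Type*} [SkewBrace A] (X Y : Set A) : AddSubgroup A :=
  AddSubgroup.closure {z | ∃ x ∈ X, ∃ y ∈ Y, z = bstar x y}

/-- The right series of `st`: `rseriesOf st 0 = A = A^(1)` and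
`rseriesOf st n = A^(n+1)`, so that `A^(n+1) = A^(n) * A`. -/
def rseriesOf {G : Type*} [AddGroup G] (st : G → G → G) : ℕ → AddSubgroup G
  | 0 => ⊤
  | n + 1 => AddSubgroup.closure {z | ∃ u ∈ rseriesOf st n, ∃ a : G, z = st u a}

theorem aux_cc {A : Type*} [SkewBrace A] (a b : A) : circ (cinv a) (circ a b) = b := by
  rw [← circ_assoc, cinv_circ, zero_circ]

theorem aux_cc2 {A : Type*} [SkewBrace A] (a b : A) : circ a (circ (cinv a) b) = b := by
  rw [← circ_assoc, circ_cinv, zero_circ]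

theorem aux_neg {A : Type*} [SkewBrace A] (c a : A) :
    circ c (-a) = c + -(circ c a) + c := by
  have h := compat c a (-a)
  rw [add_neg_cancel, circ_zero] at h
  have h2 : c + -(circ c a) + c = c + -(circ c a) + (circ c a + -c + circ c (-a)) := by
    rw [← h]
  rw [h2]
  simp [add_assoc]

theorem aux_lam_inv {A : Type*} [SkewBrace A] (x b : A) : lam (cinv x) (lam x b) = b := by
  simp [lam, compat, aux_neg, cinv_circ, aux_cc, add_assoc]

theorem aux_inv_unique {A : Type*} [SkewBrace A] {a b : A} (h : circ a b = 0) : b = cinv a := by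
  rw [← aux_cc a b, h, circ_zero]

theorem aux_cinv_cinv {A : Type*} [SkewBrace A] (a : A) : cinv (cinv a) = a :=
  (aux_inv_unique (cinv_circ a)).symm

/-- `ρ_x(a)` is an additive conjugate of `lam u' a` with `u = lam a x`. -/
theorem aux_rho {A : Type*} [SkewBrace A] (a x : A) :
    circ (cinv (lam a x)) (circ a x) =
      cinv (lam a x) + lam (cinv (lam a x)) a + -cinv (lam a x) := by
  have h : circ a x = a + lam a x := by simp [lam]
  generalize lam a x = u at h
  rw [h, compat, cinv_circ]
  simp [lam]

theorem aux_rho_surj {A : Type*} [SkewBrace A] (x b : A) :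
    ∃ a : A, circ (cinv (lam a x)) (circ a x) = b := by
  obtain ⟨d, hd⟩ : ∃ d, d = circ x (cinv b + cinv x) := ⟨_, rfl⟩
  refine ⟨cinv d, ?_⟩
  have h1 : circ (circ (cinv x) d) (lam (cinv d) x) = cinv b := by
    have hc : circ (circ (cinv x) d) (cinv d) = cinv x := by
      rw [circ_assoc, circ_cinv, circ_zero]
    have hc2 : circ (circ (cinv x) d) (circ (cinv d) x) = 0 := by
      rw [circ_assoc, aux_cc2, cinv_circ]
    rw [lam, compat, aux_neg, hc, hc2, hd, aux_cc]
    simp [add_assoc]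
  have h2 : lam (cinv d) x = circ (circ (cinv d) x) (cinv b) := by
    rw [← h1, circ_assoc, circ_assoc, aux_cc2, aux_cc]
  have h3 : circ (lam (cinv d) x) b = circ (cinv d) x := by
    rw [h2, circ_assoc, cinv_circ, circ_zero]
  rw [← h3, aux_cc]

theorem aux_image {X Y : Type*} (f : X → Y) (hf : Function.Surjective f) (S : Set X) (T : Set Y)
    (h : ∀ y, f y ∈ T ↔ y ∈ S) : f '' S = T := by
  have : S = f ⁻¹' T := by
    ext y
    exact (h y).symm
  rw [this, Set.image_preimage_eq _ hf]

/-- if `I` is a proper strong left ideal then `lam x` and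
`ρ_x : a ↦ (lam a x)' ∘ a ∘ x` preserve both `I` and its complement; consequently
the solution `r_A (a,b) = (lam a b, (lam a b)' ∘ a ∘ b)` is decomposable
as `A = I ∪ (A \ I)`. -/
theorem stmt3 {A : Type*} [SkewBrace A] (I : AddSubgroup A)
    (hleft : ∀ a : A, ∀ x ∈ I, lam a x ∈ I)
    (hnormal : I.Normal)
    (hproper : (I : Set A) ≠ Set.univ)
    (ρ : A → A → A) (hρ : ∀ x a, ρ x a = circ (cinv (lam a x)) (circ a x))
    (r : A × A → A × A)
    (hr : ∀ p : A × A, r p = (lam p.1 p.2, circ (cinv (lam p.1 p.2)) (circ p.1 p.2))) :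
    (∀ x : A, lam x '' (I : Set A) = (I : Set A)) ∧
    (∀ x : A, lam x '' ((I : Set A)ᶜ) = (I : Set A)ᶜ) ∧
    (∀ x : A, ρ x '' (I : Set A) = (I : Set A)) ∧
    (∀ x : A, ρ x '' ((I : Set A)ᶜ) = (I : Set A)ᶜ) ∧
    (r '' ((I : Set A) ×ˢ (I : Set A)) = (I : Set A) ×ˢ (I : Set A)) ∧
    (r '' (((I : Set A)ᶜ) ×ˢ ((I : Set A)ᶜ)) = ((I : Set A)ᶜ) ×ˢ ((I : Set A)ᶜ)) ∧
    (r '' ((I : Set A) ×ˢ ((I : Set A)ᶜ)) = ((I : Set A)ᶜ) ×ˢ (I : Set A)) ∧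
    (r '' (((I : Set A)ᶜ) ×ˢ (I : Set A)) = (I : Set A) ×ˢ ((I : Set A)ᶜ)) := by
  have hlm : ∀ x b, lam x b ∈ I ↔ b ∈ I := fun x b =>
    ⟨fun h => by simpa [aux_lam_inv] using hleft (cinv x) _ h, hleft x b⟩
  have hls : ∀ x : A, Function.Surjective (lam x) := fun x b =>
    ⟨circ (cinv x) (x + b), by simp [lam, aux_cc2]⟩
  have hrm : ∀ a x : A, circ (cinv (lam a x)) (circ a x) ∈ I ↔ a ∈ I := by
    intro a x
    rw [aux_rho, ← hlm (cinv (lam a x)) a]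
    refine ⟨fun h => ?_, fun h => hnormal.conj_mem _ h _⟩
    have := hnormal.conj_mem _ h (-cinv (lam a x))
    simpa [add_assoc] using this
  have hρm : ∀ x a, ρ x a ∈ I ↔ a ∈ I := fun x a => by rw [hρ]; exact hrm a x
  have hρs : ∀ x : A, Function.Surjective (ρ x) := fun x b => by
    obtain ⟨a, ha⟩ := aux_rho_surj x b
    exact ⟨a, by rw [hρ, ha]⟩
  have hrs : Function.Surjective r := by
    rintro ⟨u, v⟩
    refine ⟨(circ u v + -u, circ (cinv (circ u v + -u)) (circ u v)), ?_⟩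
    have h : lam (circ u v + -u) (circ (cinv (circ u v + -u)) (circ u v)) = u := by
      rw [lam, aux_cc2]
      simp
    rw [hr]
    simp only [h, aux_cc2, aux_cc]
  refine ⟨fun x => aux_image _ (hls x) _ _ fun y => hlm x y,
    fun x => aux_image _ (hls x) _ _ fun y => not_congr (hlm x y),
    fun x => aux_image _ (hρs x) _ _ fun y => hρm x y,
    fun x => aux_image _ (hρs x) _ _ fun y => not_congr (hρm x y), ?_, ?_, ?_, ?_⟩ <;>
  · refine aux_image _ hrs _ _ fun p => ?_
    rw [hr]
    simp only [Set.mem_prod, Set.mem_compl_iff, SetLike.mem_coe, hlm, hrm]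
    exact and_comm
end

section
/- Let A be a skew left brace such that A = B + C, where B and C are left ideals of A that are trivial as skew left braces. Then λ_{β∘γ} = λ_{γ∘β} for all β ∈ B and γ ∈ C. -/
open SkewBrace

theorem lam_add_aux {A : Type*} [SkewBrace A] (a x y : A) :
    lam a (x + y) = lam a x + lam a y := by
  simp only [lam, compat, add_assoc]

theorem lam_circ_aux {A : Type*} [SkewBrace A] (a b x : A) :
    lam (circ a b) x = lam a (lam b x) := by
  have h : lam a (circ b x) = lam a b + lam a (lam b x) := by
    rw [← lam_add_aux]; simp [lam]
  have h2 : lam a (lam b x) = -lam a b + lam a (circ b x) := by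
    rw [h]; simp
  rw [h2]
  simp only [lam, circ_assoc, neg_add_rev, neg_neg, add_assoc, add_neg_cancel_left]

theorem lam_triv_aux {A : Type*} [SkewBrace A] (B : AddSubgroup A)
    (h : ∀ x ∈ B, ∀ y ∈ B, x + y = circ x y) (x y : A) (hx : x ∈ B) (hy : y ∈ B) :
    lam x y = y := by
  simp [lam, ← h x hx y hy]

/-- if `A = B + C` with `B, C` left ideals trivial as skew braces, then
`lam (β ∘ γ) = lam (γ ∘ β)` for all `β ∈ B`, `γ ∈ C`. -/
theorem stmt4 {A : Type*} [SkewBrace A] (B C : AddSubgroup A)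
    (hB : ∀ a : A, ∀ x ∈ B, lam a x ∈ B)
    (hC : ∀ a : A, ∀ x ∈ C, lam a x ∈ C)
    (hBtriv : ∀ x ∈ B, ∀ y ∈ B, x + y = circ x y)
    (hCtriv : ∀ x ∈ C, ∀ y ∈ C, x + y = circ x y)
    (hfact : ∀ a : A, ∃ b ∈ B, ∃ c ∈ C, a = b + c) :
    ∀ β ∈ B, ∀ γ ∈ C, ∀ x : A, lam (circ β γ) x = lam (circ γ β) x := by
  intro β hβ γ hγ x
  obtain ⟨b, hb, c, hc, rfl⟩ := hfact x
  simp only [lam_circ_aux, lam_add_aux]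
  rw [lam_triv_aux B hBtriv β (lam γ b) hβ (hB _ _ hb), lam_triv_aux B hBtriv β b hβ hb,
    lam_triv_aux C hCtriv γ c hγ hc, lam_triv_aux C hCtriv γ (lam β c) hγ (hC _ _ hc)]
end

section
/- Let A be a skew left brace such that A = B + C, where B and C are left ideals of A that are trivial as skew left braces. Then (c + b) ∘ β − β = c + b + c*β for all b,β ∈ B and c ∈ C. -/
open SkewBrace

/-- if `A = B + C` with `B, C` left ideals trivial as skew braces, then
`(c + b) ∘ β - β = c + b + c*β` for all `b, β ∈ B`, `c ∈ C`. -/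
theorem stmt5 {A : Type*} [SkewBrace A] (B C : AddSubgroup A)
    (hB : ∀ a : A, ∀ x ∈ B, lam a x ∈ B)
    (hC : ∀ a : A, ∀ x ∈ C, lam a x ∈ C)
    (hBtriv : ∀ x ∈ B, ∀ y ∈ B, x + y = circ x y)
    (hCtriv : ∀ x ∈ C, ∀ y ∈ C, x + y = circ x y)
    (hfact : ∀ a : A, ∃ b ∈ B, ∃ c ∈ C, a = b + c) :
    ∀ b ∈ B, ∀ β ∈ B, ∀ c ∈ C, circ (c + b) β - β = c + b + bstar c β := by
  intro b hb β hβ c hc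
  have h1 : circ c (-(cinv c)) = c + c := by
    have h := compat c (cinv c) (-(cinv c))
    rw [add_neg_cancel, circ_zero, circ_cinv, zero_add] at h
    exact (eq_neg_add_iff_add_eq.mp h).symm
  have h2 : c + b = circ c (lam (cinv c) b) := by
    unfold lam
    rw [compat, h1, ← circ_assoc, circ_cinv, zero_circ, add_neg_cancel_right]
  have h3 : circ (c + b) β = c + b + -c + circ c β := by
    conv_lhs => rw [h2]
    rw [circ_assoc, ← hBtriv _ (hB _ b hb) β hβ, compat, ← h2]
  rw [h3, bstar, lam]
  simp only [sub_eq_add_neg, add_assoc]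
end

section
/- Let A be a skew left brace such that A = B + C, where B and C are left ideals of A that are trivial as skew left braces. Then for all b ∈ B and c ∈ C: b∘c∘b'∘c' = b∘c − c∘b = b + λ_b(c) − λ_c(b) − c, and this element lies in Ker λ (i.e., λ applied to it is the identity map of A). -/
open SkewBrace

theorem circ_neg_aux {A : Type*} [SkewBrace A] (a b : A) :
    circ a (-b) = a + -circ a b + a := by
  have h := compat a b (-b)
  rw [add_neg_cancel, circ_zero] at h
  have h2 : circ a (-b) = -(circ a b + -a) + (circ a b + -a + circ a (-b)) := by
    rw [neg_add_cancel_left]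
  rw [h2, ← h, neg_add_rev, neg_neg]

theorem circ_eq_aux {A : Type*} [SkewBrace A] (a b : A) : circ a b = a + lam a b := by
  simp only [lam, add_neg_cancel_left]

theorem lam_zero_aux {A : Type*} [SkewBrace A] (x : A) : lam 0 x = x := by
  simp only [lam, zero_circ, neg_zero, zero_add]

/-- if `A = B + C` with `B, C` left ideals trivial as skew braces, then for
`b ∈ B`, `c ∈ C`: `b ∘ c ∘ b' ∘ c' = b ∘ c - c ∘ b = b + lam b c - lam c b - c`, and this
element lies in `Ker lam`. -/
theorem stmt6 {A : Type*} [SkewBrace A] (B C : AddSubgroup A)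
    (hB : ∀ a : A, ∀ x ∈ B, lam a x ∈ B)
    (hC : ∀ a : A, ∀ x ∈ C, lam a x ∈ C)
    (hBtriv : ∀ x ∈ B, ∀ y ∈ B, x + y = circ x y)
    (hCtriv : ∀ x ∈ C, ∀ y ∈ C, x + y = circ x y)
    (hfact : ∀ a : A, ∃ b ∈ B, ∃ c ∈ C, a = b + c) :
    ∀ b ∈ B, ∀ c ∈ C,
      circ (circ (circ b c) (cinv b)) (cinv c) = circ b c - circ c b ∧
      circ b c - circ c b = b + lam b c - lam c b - c ∧
      (∀ x : A, lam (circ b c - circ c b) x = x) := by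
  intro b hb c hc
  have hBl : ∀ x ∈ B, ∀ y ∈ B, lam x y = y := fun x hx y hy => by
    rw [lam, ← hBtriv x hx y hy, neg_add_cancel_left]
  have hCl : ∀ x ∈ C, ∀ y ∈ C, lam x y = y := fun x hx y hy => by
    rw [lam, ← hCtriv x hx y hy, neg_add_cancel_left]
  have hcomm : ∀ z, lam b (lam c z) = lam c (lam b z) := by
    intro z
    obtain ⟨u, hu, v, hv, rfl⟩ := hfact z
    simp only [lam_add_aux]
    rw [hBl b hb _ (hB c u hu), hBl b hb u hu, hCl c hc v hv, hCl c hc _ (hC b v hv)]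
  have hker : ∀ x, lam (circ (circ (circ b c) (cinv b)) (cinv c)) x = x := by
    intro x
    simp only [lam_circ_aux]
    rw [hcomm, ← lam_circ_aux b (cinv b), circ_cinv, lam_zero_aux, ← lam_circ_aux, circ_cinv,
      lam_zero_aux]
  have hk : circ (circ (circ b c) (cinv b)) (cinv c) = circ b c - circ c b := by
    have h1 : circ (circ (circ (circ b c) (cinv b)) (cinv c)) (circ c b) = circ b c := by
      rw [← circ_assoc, circ_assoc _ (cinv c) c, cinv_circ, circ_zero, circ_assoc _ (cinv b) b,
        cinv_circ, circ_zero]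
    rw [circ_eq_aux (circ (circ (circ b c) (cinv b)) (cinv c)), hker] at h1
    exact eq_sub_of_add_eq h1
  refine ⟨hk, ?_, fun x => ?_⟩
  · rw [circ_eq_aux b c, circ_eq_aux c b]
    simp only [sub_eq_add_neg, neg_add_rev, add_assoc]
  · rw [← hk]; exact hker x
end

section
/- Let A be a skew left brace and suppose A = B + C is a factorization through strong left ideals B and C that are trivial as skew left braces. Then A is right nilpotent of class at most three, i.e., A^(3) = 0 (equivalently, (x*y)*z = 0 for all x,y,z ∈ A). -/
open SkewBrace

section aux
variable {A : Type*} [SkewBrace A]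

theorem aux_circ (a b : A) : circ a b = a + lam a b := by simp [lam]

theorem aux_add (a x y : A) : lam a (x + y) = lam a x + lam a y := by
  simp only [lam, compat, add_assoc]

theorem aux_comp (a b x : A) : lam (circ a b) x = lam a (lam b x) := by
  have h : circ a (circ b x) = a + lam a (b + lam b x) := by
    rw [← aux_circ b x, ← aux_circ]
  rw [lam, circ_assoc, h, aux_add, aux_circ a b]
  simp [add_assoc]

theorem aux_zero (x : A) : lam 0 x = x := by simp [lam, zero_circ]

theorem aux_cinv (a x : A) : lam a (lam (cinv a) x) = x := by
  rw [← aux_comp, circ_cinv, aux_zero]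

theorem aux_triv (B : AddSubgroup A) (h : ∀ x ∈ B, ∀ y ∈ B, x + y = circ x y)
    (x y : A) (hx : x ∈ B) (hy : y ∈ B) : lam x y = y := by
  rw [lam, ← h x hx y hy]; simp

/-- `λ_{λ_d(e)} = λ_e` on `C`, for `d ∈ C`, `e ∈ B`. -/
theorem aux_inv (B C : AddSubgroup A)
    (hB : ∀ a : A, ∀ x ∈ B, lam a x ∈ B)
    (hC : ∀ a : A, ∀ x ∈ C, lam a x ∈ C) (hCn : C.Normal)
    (hCt : ∀ x ∈ C, ∀ y ∈ C, x + y = circ x y)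
    (d e x : A) (hd : d ∈ C) (hx : x ∈ C) :
    lam (lam d e) x = lam e x := by
  have hT := aux_triv C hCt
  have h2 : -(lam d e) + d + lam d e ∈ C := by
    simpa using hCn.conj_mem d hd (-(lam d e))
  have hc := hC (cinv (lam d e)) _ h2
  have h1 : circ d e = circ (lam d e) (lam (cinv (lam d e)) (-(lam d e) + d + lam d e)) := by
    rw [aux_circ (lam d e), aux_cinv, aux_circ]; simp [add_assoc]
  have h3 := aux_comp d e x
  rw [h1, aux_comp, hT _ x hc hx, hT d _ hd (hC _ _ hx)] at h3
  exact h3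

/-- `λ_{b + λ_b(c) - b} = λ_c` on `B`. -/
theorem aux_conj (B C : AddSubgroup A)
    (hB : ∀ a : A, ∀ x ∈ B, lam a x ∈ B)
    (hBt : ∀ x ∈ B, ∀ y ∈ B, x + y = circ x y)
    (b c x : A) (hb : b ∈ B) (hx : x ∈ B) :
    lam (b + lam b c + -b) x = lam c x := by
  have hT := aux_triv B hBt
  have h1 : circ b c = circ (b + lam b c + -b) (lam (cinv (b + lam b c + -b)) b) := by
    rw [aux_circ (b + lam b c + -b), aux_cinv, aux_circ]; simp [add_assoc]
  have h3 := aux_comp b c x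
  rw [h1, aux_comp, hT _ x (hB _ _ hb) hx, hT b _ hb (hB _ _ hx)] at h3
  exact h3

end aux

theorem stmt9 {A : Type*} [SkewBrace A] (B C : AddSubgroup A)
    (hB : ∀ a : A, ∀ x ∈ B, lam a x ∈ B)
    (hC : ∀ a : A, ∀ x ∈ C, lam a x ∈ C)
    (hBn : B.Normal) (hCn : C.Normal)
    (hBtriv : ∀ x ∈ B, ∀ y ∈ B, x + y = circ x y)
    (hCtriv : ∀ x ∈ C, ∀ y ∈ C, x + y = circ x y)
    (hfact : ∀ a : A, ∃ b ∈ B, ∃ c ∈ C, a = b + c) :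
    rseriesOf (bstar (A := A)) 2 = ⊥ ∧ ∀ x y z : A, bstar (bstar x y) z = 0 := by
  have hTB := aux_triv B hBtriv
  have hTC := aux_triv C hCtriv
  let K : AddSubgroup A :=
    { carrier := {k | ∀ z, lam k z = z}
      zero_mem' := aux_zero
      add_mem' := by
        intro k l hk hl z
        have h : k + l = circ k l := by rw [aux_circ, hk]
        rw [h, aux_comp, hl, hk]
      neg_mem' := by
        intro k hk z
        have h : circ k (-k) = 0 := by rw [aux_circ, hk]; simp
        have h2 := aux_comp k (-k) z
        rw [h, aux_zero, hk] at h2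
        exact h2.symm }
  have hKB : ∀ k ∈ B, (∀ z ∈ C, lam k z = z) → k ∈ K := by
    intro k hk h z
    obtain ⟨b, hb, c, hc, rfl⟩ := hfact z
    rw [aux_add, hTB k b hk hb, h c hc]
  have hKC : ∀ k ∈ C, (∀ z ∈ B, lam k z = z) → k ∈ K := by
    intro k hk h z
    obtain ⟨b, hb, c, hc, rfl⟩ := hfact z
    rw [aux_add, hTC k c hk hc, h b hb]
  -- general: lam of a difference inside a trivial left ideal
  have hdiff : ∀ (D : AddSubgroup A), (∀ x ∈ D, ∀ y ∈ D, x + y = circ x y) →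
      ∀ u ∈ D, ∀ v ∈ D, ∀ z, (∀ w, lam v w = lam u w ∨ w ≠ lam (-v) z) →
      lam (u - v) z = z := by
    intro D hD u hu v hv z h
    rw [sub_eq_add_neg, hD u hu _ (D.neg_mem hv), aux_comp]
    have h1 : lam v (lam (-v) z) = z := by
      rw [← aux_comp, ← hD v hv _ (D.neg_mem hv)]; simp [aux_zero]
    rcases h (lam (-v) z) with h | h
    · rw [← h, h1]
    · exact absurd rfl h
  have hbc : ∀ b ∈ B, ∀ c ∈ C, lam b c - c ∈ K := by
    intro b hb c hc
    refine hKC _ (C.sub_mem (hC _ _ hc) hc) fun z hz => ?_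
    refine hdiff C hCtriv _ (hC _ _ hc) _ hc z fun w => ?_
    by_cases hw : w = lam (-c) z
    · left
      rw [aux_inv C B hC hB hBn hBtriv b c w hb (hw ▸ hB _ _ hz)]
    · exact Or.inr hw
  have hcb : ∀ c ∈ C, ∀ b ∈ B, lam c b - b ∈ K := by
    intro c hc b hb
    refine hKB _ (B.sub_mem (hB _ _ hb) hb) fun z hz => ?_
    refine hdiff B hBtriv _ (hB _ _ hb) _ hb z fun w => ?_
    by_cases hw : w = lam (-b) z
    · left
      rw [aux_inv B C hB hC hCn hCtriv c b w hc (hw ▸ hC _ _ hz)]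
    · exact Or.inr hw
  have hconj : ∀ b ∈ B, ∀ k ∈ C, k ∈ K → b + k + -b ∈ K := by
    intro b hb k hk hkK
    refine hKC _ (hCn.conj_mem k hk b) fun z hz => ?_
    have h := aux_conj B C hB hBtriv b (lam (cinv b) k) z hb hz
    rw [aux_cinv] at h
    have h2 := aux_inv C B hC hB hBn hBtriv b (lam (cinv b) k) z hb hz
    rw [aux_cinv] at h2
    rw [h, ← h2, hkK z]
  have hstar : ∀ x y : A, bstar x y ∈ K := by
    intro x y
    obtain ⟨b, hb, c, hc, rfl⟩ := hfact x
    obtain ⟨b1, hb1, c1, hc1, rfl⟩ := hfact y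
    have hc' := hC (cinv b) c hc
    have hx : b + c = circ b (lam (cinv b) c) := by rw [aux_circ, aux_cinv]
    have e : bstar (b + c) (b1 + c1) =
        (lam (lam (cinv b) c) b1 - b1) + (b1 + (lam b c1 - c1) + -b1) := by
      rw [bstar, hx, aux_comp, aux_add, aux_add, hTC _ c1 hc' hc1,
        hTB b _ hb (hB _ _ hb1)]
      simp [sub_eq_add_neg, add_assoc]
    rw [e]
    exact K.add_mem (hcb _ hc' _ hb1)
      (hconj b1 hb1 _ (C.sub_mem (hC _ _ hc1) hc1) (hbc b hb c1 hc1))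
  have h0 : ∀ k ∈ K, ∀ z, bstar k z = 0 := by
    intro k hk z
    rw [bstar, hk z, sub_self]
  refine ⟨?_, fun x y z => h0 _ (hstar x y) z⟩
  have h1 : rseriesOf (bstar (A := A)) 1 ≤ K := by
    rw [rseriesOf, AddSubgroup.closure_le]
    rintro _ ⟨u, _, a, rfl⟩
    exact hstar u a
  rw [eq_bot_iff, rseriesOf, AddSubgroup.closure_le]
  rintro _ ⟨u, hu, a, rfl⟩
  exact h0 u (h1 hu) a
end

section
/- Let (G,+) be a group with an exact factorization through subgroups B and C (i.e., G = B + C and B ∩ C = {0}), and let A = (G,+,∘) be the skew left brace with x∘y = b + y + c, where x = b + c, b ∈ B, c ∈ C. If (C,+) is a normal subgroup of (G,+), then C is an ideal of A; and if (B,+) is a normal subgroup of (G,+), then B is an ideal of A. -/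
open SkewBrace

/-- for the skew brace obtained from an exact factorization `G = B + C`,
if `(C,+)` is normal in `(G,+)` then `C` is an ideal of `A`, and if `(B,+)` is normal
in `(G,+)` then `B` is an ideal of `A`.  (An ideal is a left ideal normal in both
`(A,+)` and `(A,∘)`; `cinv` is the inverse for `∘`.) -/
theorem stmt16 {G : Type*} [AddGroup G] (B C : AddSubgroup G)
    (hfact : ∀ g : G, ∃ b ∈ B, ∃ c ∈ C, g = b + c)
    (hdisj : B ⊓ C = ⊥)
    (β γ : G → G) (hβ : ∀ g : G, β g ∈ B) (hγ : ∀ g : G, γ g ∈ C)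
    (hdec : ∀ g : G, g = β g + γ g)
    (circ : G → G → G) (hcirc : ∀ x y : G, circ x y = β x + y + γ x)
    (lam : G → G → G) (hlam : ∀ a x : G, lam a x = -a + circ a x)
    (cinv : G → G) (hcinv : ∀ x : G, circ x (cinv x) = 0 ∧ circ (cinv x) x = 0) :
    (C.Normal →
      (∀ a : G, ∀ x ∈ C, lam a x ∈ C) ∧ C.Normal ∧
      (∀ a : G, ∀ x ∈ C, circ (circ a x) (cinv a) ∈ C)) ∧
    (B.Normal →
      (∀ a : G, ∀ x ∈ B, lam a x ∈ B) ∧ B.Normal ∧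
      (∀ a : G, ∀ x ∈ B, circ (circ a x) (cinv a) ∈ B)) := by
  constructor
  · intro hN
    have key : ∀ x y : G, QuotientAddGroup.mk' C (circ x y)
        = QuotientAddGroup.mk' C x + QuotientAddGroup.mk' C y := by
      intro x y
      have h0 : QuotientAddGroup.mk' C (γ x) = 0 := (QuotientAddGroup.eq_zero_iff _).2 (hγ x)
      have h1 : QuotientAddGroup.mk' C x = QuotientAddGroup.mk' C (β x) := by
        conv_lhs => rw [hdec x, map_add, h0, add_zero]
      rw [hcirc, map_add, map_add, h0, add_zero, h1]
    refine ⟨fun a x hx => ?_, hN, fun a x hx => ?_⟩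
    · have h0 : QuotientAddGroup.mk' C x = 0 := (QuotientAddGroup.eq_zero_iff _).2 hx
      apply (QuotientAddGroup.eq_zero_iff _).1
      change QuotientAddGroup.mk' C (lam a x) = 0
      rw [hlam, map_add, key, h0, map_neg, add_zero, neg_add_cancel]
    · have h0 : QuotientAddGroup.mk' C x = 0 := (QuotientAddGroup.eq_zero_iff _).2 hx
      apply (QuotientAddGroup.eq_zero_iff _).1
      change QuotientAddGroup.mk' C (circ (circ a x) (cinv a)) = 0
      rw [key, key, h0, add_zero, ← key, (hcinv a).1, map_zero]
  · intro hN
    have key : ∀ x y : G, QuotientAddGroup.mk' B (circ x y)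
        = QuotientAddGroup.mk' B y + QuotientAddGroup.mk' B x := by
      intro x y
      have h0 : QuotientAddGroup.mk' B (β x) = 0 := (QuotientAddGroup.eq_zero_iff _).2 (hβ x)
      have h1 : QuotientAddGroup.mk' B x = QuotientAddGroup.mk' B (γ x) := by
        conv_lhs => rw [hdec x, map_add, h0, zero_add]
      rw [hcirc, map_add, map_add, h0, zero_add, h1]
    refine ⟨fun a x hx => ?_, hN, fun a x hx => ?_⟩
    · have h0 : QuotientAddGroup.mk' B x = 0 := (QuotientAddGroup.eq_zero_iff _).2 hx
      apply (QuotientAddGroup.eq_zero_iff _).1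
      change QuotientAddGroup.mk' B (lam a x) = 0
      rw [hlam, map_add, key, h0, map_neg, zero_add, neg_add_cancel]
    · have h0 : QuotientAddGroup.mk' B x = 0 := (QuotientAddGroup.eq_zero_iff _).2 hx
      apply (QuotientAddGroup.eq_zero_iff _).1
      change QuotientAddGroup.mk' B (circ (circ a x) (cinv a)) = 0
      rw [key, key, h0, zero_add, ← key, (hcinv a).1, map_zero]
end

section
/- Let (G,+) be a group with an exact factorization through subgroups B and C (i.e., G = B + C and B ∩ C = {0}), and let A = (G,+,∘) be the skew left brace with x∘y = b + y + c, where x = b + c, b ∈ B, c ∈ C. Assume that both (B,+) and (C,+) are normal subgroups of (G,+) and that (C,+) is abelian. Then A is right nilpotent of class at most three, i.e., A^(3) = 0 (equivalently, (x*y)*z = 0 for all x,y,z ∈ A). -/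
open SkewBrace

/-- for the skew brace obtained from an exact factorization `G = B + C`
with both `(B,+)` and `(C,+)` normal in `(G,+)` and `(C,+)` abelian, the skew brace is
right nilpotent of class at most three: `A^(3) = 0` (here `rseriesOf star 2 = A^(3)`),
equivalently `(x*y)*z = 0` for all `x,y,z`. -/
theorem stmt17 {G : Type*} [AddGroup G] (B C : AddSubgroup G)
    (hfact : ∀ g : G, ∃ b ∈ B, ∃ c ∈ C, g = b + c)
    (hdisj : B ⊓ C = ⊥)
    (β γ : G → G) (hβ : ∀ g : G, β g ∈ B) (hγ : ∀ g : G, γ g ∈ C)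
    (hdec : ∀ g : G, g = β g + γ g)
    (circ : G → G → G) (hcirc : ∀ x y : G, circ x y = β x + y + γ x)
    (lam : G → G → G) (hlam : ∀ a x : G, lam a x = -a + circ a x)
    (star : G → G → G) (hstar : ∀ a x : G, star a x = lam a x - x)
    (hBn : B.Normal) (hCn : C.Normal)
    (hCab : ∀ x ∈ C, ∀ y ∈ C, x + y = y + x) :
    rseriesOf star 2 = ⊥ ∧ ∀ x y z : G, star (star x y) z = 0 := by
  have hcomm : ∀ b ∈ B, ∀ c ∈ C, b + c = c + b := fun b hb c hc =>
    AddSubgroup.addCommute_of_normal_of_disjoint B C hBn hCn (disjoint_iff.mpr hdisj) b c hb hc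
  have hcent : ∀ y : G, ∀ c ∈ C, y + c = c + y := by
    intro y c hc
    rw [hdec y, add_assoc, hCab _ (hγ y) c hc, ← add_assoc, hcomm _ (hβ y) c hc, add_assoc]
  have hz : ∀ x y : G, star x y = 0 := by
    intro x y
    have h : circ x y = x + y := by
      rw [hcirc, add_assoc, hcent y _ (hγ x), ← add_assoc, ← hdec x]
    rw [hstar, hlam, h, neg_add_cancel_left, sub_self]
  refine ⟨?_, fun x y z => hz _ _⟩
  rw [rseriesOf, AddSubgroup.closure_eq_bot_iff]
  rintro z ⟨u, -, a, rfl⟩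
  exact hz u a
end

section
/- Let S be a finite simple skew left brace and n a positive integer. Then the direct product A = S^n (with componentwise operations) is a characteristically simple skew left brace: its only characteristic ideals are 0 and A. -/
open SkewBrace

/-- An ideal of a skew brace: a left ideal that is normal in `(A,+)` and in `(A,∘)`. -/
def IsIdeal {A : Type*} [SkewBrace A] (I : AddSubgroup A) : Prop :=
  (∀ a : A, ∀ x ∈ I, lam a x ∈ I) ∧ I.Normal ∧
  (∀ a : A, ∀ x ∈ I, circ (circ a x) (cinv a) ∈ I)

/-- A skew brace automorphism: a bijection preserving `+` and `∘`. -/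
def IsBrAut {A : Type*} [SkewBrace A] (σ : A → A) : Prop :=
  Function.Bijective σ ∧ (∀ x y : A, σ (x + y) = σ x + σ y) ∧
  (∀ x y : A, σ (circ x y) = circ (σ x) (σ y))

/-- A characteristic ideal: an ideal invariant under all skew brace automorphisms. -/
def IsCharIdeal {A : Type*} [SkewBrace A] (I : AddSubgroup A) : Prop :=
  IsIdeal I ∧ ∀ σ : A → A, IsBrAut σ → σ '' (I : Set A) = (I : Set A)

/-- A simple skew brace: nontrivial, and its only ideals are `0` and `A`. -/
def IsSimpleSB (A : Type*) [SkewBrace A] : Prop :=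
  Nontrivial A ∧ ∀ I : AddSubgroup A, IsIdeal I → I = ⊥ ∨ I = ⊤

/-- The direct product `S^n` with componentwise skew brace structure. -/
instance piSkewBrace {n : ℕ} {S : Type*} [SkewBrace S] : SkewBrace (Fin n → S) :=
  { Pi.addGroup with
    circ := fun x y i => circ (x i) (y i)
    cinv := fun x i => cinv (x i)
    circ_assoc := fun a b c => funext fun i => circ_assoc (a i) (b i) (c i)
    zero_circ := fun a => funext fun i => zero_circ (a i)
    circ_zero := fun a => funext fun i => circ_zero (a i)
    cinv_circ := fun a => funext fun i => cinv_circ (a i)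
    circ_cinv := fun a => funext fun i => circ_cinv (a i)
    compat := fun a b c => funext fun i => compat (a i) (b i) (c i) }

theorem aux_circ_add {S : Type*} [SkewBrace S] {s z w : S} (hz : circ s z = s + z)
    (hw : circ s w = s + w) : circ s (z + w) = s + (z + w) := by
  rw [compat, hz, hw]
  simp [add_assoc]

/-- The annihilator-type ideal: elements on which everything acts trivially. -/
def annih (S : Type*) [SkewBrace S] : AddSubgroup S where
  carrier := {z | ∀ s : S, s + z = z + s ∧ circ s z = s + z ∧ circ z s = z + s}
  zero_mem' := fun s => ⟨by simp, by simp [circ_zero], by simp [zero_circ]⟩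
  add_mem' := by
    intro z w hz hw s
    refine ⟨?_, aux_circ_add (hz s).2.1 (hw s).2.1, ?_⟩
    · rw [← add_assoc, (hz s).1, add_assoc, (hw s).1, add_assoc]
    · rw [← (hz w).2.2, circ_assoc, (hw s).2.2, (hz _).2.2, (hz w).2.2, add_assoc]
  neg_mem' := by
    intro z hz s
    have h1 : ∀ s : S, circ s (-z) = s + -z := by
      intro s
      have h := compat s z (-z)
      rw [add_neg_cancel, circ_zero, (hz s).2.1] at h
      have h2 : circ s (-z) = -(s + z + -s) + s := by
        rw [eq_neg_add_iff_add_eq]; exact h.symm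
      rw [h2]; simp [add_assoc]
    refine ⟨?_, h1 s, ?_⟩
    · rw [← sub_eq_add_neg, sub_eq_iff_eq_add, add_assoc, (hz s).1]; simp
    · have h : circ z (circ (-z) s) = s := by
        rw [← circ_assoc, h1 z, add_neg_cancel, zero_circ]
      rw [(hz _).2.2] at h
      rw [eq_neg_add_iff_add_eq]; exact h

theorem annih_ideal (S : Type*) [SkewBrace S] : IsIdeal (annih S) := by
  refine ⟨?_, ⟨?_⟩, ?_⟩
  · intro a x hx
    have : lam a x = x := by simp [lam, (hx a).2.1]
    rw [this]; exact hx
  · intro x hx a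
    have : a + x + -a = x := by rw [(hx a).1]; simp
    rw [this]; exact hx
  · intro a x hx
    have : circ (circ a x) (cinv a) = x := by
      rw [(hx a).2.1, (hx a).1, ← (hx a).2.2, circ_assoc, circ_cinv, circ_zero]
    rw [this]; exact hx

theorem cinv_zero' {S : Type*} [SkewBrace S] : cinv (0 : S) = 0 := by
  have := circ_cinv (0 : S)
  rwa [zero_circ] at this

/-- The elements of `S` whose image in the `i`-th factor lies in `I`. -/
def comp {n : ℕ} {S : Type*} [SkewBrace S] (I : AddSubgroup (Fin n → S)) (i : Fin n) :
    AddSubgroup S where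
  carrier := {s | Pi.single i s ∈ I}
  zero_mem' := by
    have : (Pi.single i (0 : S) : Fin n → S) = 0 := Pi.single_zero i
    show Pi.single i (0 : S) ∈ I
    rw [this]; exact I.zero_mem
  add_mem' := by
    intro a b ha hb
    have : (Pi.single i (a + b) : Fin n → S) = Pi.single i a + Pi.single i b := by
      funext k
      show _ = (Pi.single i a : Fin n → S) k + (Pi.single i b : Fin n → S) k
      by_cases h : k = i
      · subst h; simp
      · simp [h]
    show Pi.single i (a + b) ∈ I
    rw [this]; exact I.add_mem ha hb
  neg_mem' := by
    intro a ha
    have : (Pi.single i (-a) : Fin n → S) = - Pi.single i a := by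
      funext k
      show _ = -(Pi.single i a : Fin n → S) k
      by_cases h : k = i
      · subst h; simp
      · simp [h]
    show Pi.single i (-a) ∈ I
    rw [this]; exact I.neg_mem ha

theorem mem_comp {n : ℕ} {S : Type*} [SkewBrace S] {I : AddSubgroup (Fin n → S)} {i : Fin n}
    {s : S} {y : Fin n → S} (hy : y ∈ I) (h1 : y i = s) (h2 : ∀ j, j ≠ i → y j = 0) :
    s ∈ comp I i := by
  have : y = Pi.single i s := by
    funext j
    by_cases h : j = i
    · subst h; simp [h1]
    · simp [h, h2 j h]
  show Pi.single i s ∈ I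
  rw [← this]; exact hy

theorem comp_ideal {n : ℕ} {S : Type*} [SkewBrace S] {I : AddSubgroup (Fin n → S)}
    (hI : IsIdeal I) (i : Fin n) : IsIdeal (comp I i) := by
  obtain ⟨hl, hn, hc⟩ := hI
  refine ⟨?_, ⟨?_⟩, ?_⟩
  · intro a x hx
    refine mem_comp (hl (Pi.single i a) _ hx) ?_ ?_
    · show -(Pi.single i a : Fin n → S) i + circ ((Pi.single i a : Fin n → S) i) ((Pi.single i x : Fin n → S) i) = _
      simp [lam]
    · intro j hj
      show -(Pi.single i a : Fin n → S) j + circ ((Pi.single i a : Fin n → S) j) ((Pi.single i x : Fin n → S) j) = _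
      simp [hj, circ_zero]
  · intro x hx a
    refine mem_comp (hn.conj_mem _ hx (Pi.single i a)) ?_ ?_
    · show (Pi.single i a : Fin n → S) i + (Pi.single i x : Fin n → S) i + -(Pi.single i a : Fin n → S) i = _
      simp
    · intro j hj
      show (Pi.single i a : Fin n → S) j + (Pi.single i x : Fin n → S) j + -(Pi.single i a : Fin n → S) j = _
      simp [hj]
  · intro a x hx
    refine mem_comp (hc (Pi.single i a) _ hx) ?_ ?_
    · show circ (circ ((Pi.single i a : Fin n → S) i) ((Pi.single i x : Fin n → S) i)) (cinv ((Pi.single i a : Fin n → S) i)) = _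
      simp
    · intro j hj
      show circ (circ ((Pi.single i a : Fin n → S) j) ((Pi.single i x : Fin n → S) j)) (cinv ((Pi.single i a : Fin n → S) j)) = _
      simp [hj, circ_zero, cinv_zero']

theorem coord_annih {n : ℕ} {S : Type*} [SkewBrace S] {I : AddSubgroup (Fin n → S)}
    (hI : IsIdeal I) (i : Fin n) (h0 : comp I i = ⊥) {x : Fin n → S} (hx : x ∈ I) :
    x i ∈ annih S := by
  obtain ⟨hl, hn, hc⟩ := hI
  have key : ∀ t ∈ comp I i, t = 0 := fun t ht => by
    rw [h0] at ht; exact AddSubgroup.mem_bot.1 ht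
  intro s
  have A : s + x i = x i + s := by
    have := key (s + x i + -s + -(x i)) (mem_comp
      (I.add_mem (hn.conj_mem _ hx (Pi.single i s)) (I.neg_mem hx)) (by
        show (Pi.single i s : Fin n → S) i + x i + -(Pi.single i s : Fin n → S) i + -(x i) = _
        simp) (by
        intro j hj
        show (Pi.single i s : Fin n → S) j + x j + -(Pi.single i s : Fin n → S) j + -(x j) = _
        simp [hj]))
    rw [add_neg_eq_zero, add_neg_eq_iff_eq_add] at this
    exact this
  have B : circ s (x i) = s + x i := by
    have := key (-s + circ s (x i) + -(x i)) (mem_comp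
      (I.add_mem (hl (Pi.single i s) _ hx) (I.neg_mem hx)) (by
        show -(Pi.single i s : Fin n → S) i + circ ((Pi.single i s : Fin n → S) i) (x i) + -(x i) = _
        simp) (by
        intro j hj
        show -(Pi.single i s : Fin n → S) j + circ ((Pi.single i s : Fin n → S) j) (x j) + -(x j) = _
        simp [hj, zero_circ]))
    rw [add_neg_eq_zero, neg_add_eq_iff_eq_add] at this
    exact this
  have C : circ (circ s (x i)) (cinv s) = x i := by
    have := key (circ (circ s (x i)) (cinv s) + -(x i)) (mem_comp
      (I.add_mem (hc (Pi.single i s) _ hx) (I.neg_mem hx)) (by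
        show circ (circ ((Pi.single i s : Fin n → S) i) (x i)) (cinv ((Pi.single i s : Fin n → S) i)) + -(x i) = _
        simp) (by
        intro j hj
        show circ (circ ((Pi.single i s : Fin n → S) j) (x j)) (cinv ((Pi.single i s : Fin n → S) j)) + -(x j) = _
        simp [hj, zero_circ, circ_zero, cinv_zero']))
    rwa [add_neg_eq_zero] at this
  refine ⟨A, B, ?_⟩
  have D : circ (x i) s = circ s (x i) := by
    conv_lhs => rw [← C]
    rw [circ_assoc, cinv_circ, circ_zero]
  rw [D, B, A]

theorem aut_mem {A : Type*} [SkewBrace A] {I : AddSubgroup A} (hI : IsCharIdeal I)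
    {σ : A → A} (hσ : IsBrAut σ) {x : A} (hx : x ∈ I) : σ x ∈ I := by
  have : σ x ∈ σ '' (I : Set A) := ⟨x, hx, rfl⟩
  rw [hI.2 σ hσ] at this
  exact this

theorem swap_aut {n : ℕ} {S : Type*} [SkewBrace S] (e : Equiv.Perm (Fin n)) :
    IsBrAut (fun x : Fin n → S => fun k => x (e k)) := by
  refine ⟨⟨?_, ?_⟩, fun _ _ => rfl, fun _ _ => rfl⟩
  · intro x y h
    funext k
    have := congrFun h (e.symm k)
    simpa using this
  · intro y
    exact ⟨fun k => y (e.symm k), by funext k; simp⟩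

theorem transv_aut {n : ℕ} {S : Type*} [SkewBrace S] (hT : ∀ z : S, z ∈ annih S)
    {i j : Fin n} (hij : i ≠ j) :
    IsBrAut (fun x : Fin n → S => fun k => if k = j then x k + x i else x k) := by
  have hadd : ∀ a b c d : S, (a + b) + (c + d) = (a + c) + (b + d) := by
    intro a b c d
    rw [add_assoc, ← add_assoc b, (hT c b).1, add_assoc, add_assoc]
  refine ⟨⟨?_, ?_⟩, ?_, ?_⟩
  · intro x y h
    have h1 := congrFun h i
    simp only [hij, if_false] at h1
    funext k
    have h2 := congrFun h k
    by_cases hk : k = j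
    · simp only [hk, if_true, h1] at h2
      rw [hk]; exact add_right_cancel h2
    · simpa [hk] using h2
  · intro y
    refine ⟨fun k => if k = j then y k + -(y i) else y k, ?_⟩
    funext k
    by_cases hk : k = j <;> simp [hk, hij]
  · intro x y
    funext k
    show (if k = j then (x k + y k) + (x i + y i) else x k + y k) =
      (if k = j then x k + x i else x k) + (if k = j then y k + y i else y k)
    by_cases hk : k = j
    · simp only [hk, if_true]; exact hadd _ _ _ _
    · simp [hk]
  · intro x y
    funext k
    show (if k = j then circ (x k) (y k) + circ (x i) (y i) else circ (x k) (y k)) =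
      circ (if k = j then x k + x i else x k) (if k = j then y k + y i else y k)
    have hc : ∀ a b : S, circ a b = a + b := fun a b => (hT b a).2.1
    by_cases hk : k = j
    · simp only [hk, if_true, hc]; exact hadd _ _ _ _
    · simp [hk]

theorem eq_top_of_comp {n : ℕ} {S : Type*} [SkewBrace S] {I : AddSubgroup (Fin n → S)}
    (h : ∀ i, comp I i = ⊤) : I = ⊤ := by
  have key : ∀ (F : Finset (Fin n)) (x : Fin n → S), (∀ k, k ∉ F → x k = 0) → x ∈ I := by
    intro F
    induction F using Finset.induction_on with
    | empty =>
      intro x hx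
      have : x = 0 := funext fun k => hx k (by simp)
      rw [this]; exact I.zero_mem
    | insert a F ha ih =>
      intro x hx
      have h1 : (Pi.single a (x a) : Fin n → S) ∈ I := by
        have : x a ∈ comp I a := by rw [h a]; trivial
        exact this
      have h2 : (fun k => if k = a then 0 else x k) ∈ I := by
        apply ih
        intro k hk
        by_cases hka : k = a
        · simp [hka]
        · simp only [hka, if_false]
          exact hx k (by simp [hka, hk])
      have h3 : x = Pi.single a (x a) + (fun k => if k = a then 0 else x k) := by
        funext k
        show x k = (Pi.single a (x a) : Fin n → S) k + (if k = a then 0 else x k)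
        by_cases hka : k = a
        · subst hka; simp
        · simp [hka]
      rw [h3]; exact I.add_mem h1 h2
  rw [eq_top_iff]
  intro x _
  exact key Finset.univ x (by simp)

/-- if `S` is a finite simple skew brace and `n` is a positive integer,
then the direct product `S^n` is characteristically simple: its only characteristic
ideals are `0` and the whole brace. -/
theorem stmt19 {S : Type*} [SkewBrace S] [Finite S] (hS : IsSimpleSB S)
    (n : ℕ) (hn : 0 < n) :
    ∀ I : AddSubgroup (Fin n → S), IsCharIdeal I → I = ⊥ ∨ I = ⊤ := by
  intro I hI
  obtain ⟨hid, _⟩ := id hI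
  by_cases hex : ∃ i, comp I i = ⊤
  · right
    obtain ⟨i, hi⟩ := hex
    apply eq_top_of_comp
    intro j
    rw [eq_top_iff]
    intro s _
    have hs : s ∈ comp I i := by rw [hi]; trivial
    refine mem_comp (aut_mem hI (swap_aut (Equiv.swap i j)) hs) ?_ ?_
    · simp
    · intro k hk
      have : Equiv.swap i j k ≠ i := by
        intro h
        apply hk
        have := congrArg (Equiv.swap i j) h
        simpa using this
      simp [this]
  · left
    have h0 : ∀ i, comp I i = ⊥ := fun i =>
      (hS.2 _ (comp_ideal hid i)).resolve_right fun h => hex ⟨i, h⟩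
    have key : ∀ i, ∀ t ∈ comp I i, t = 0 := fun i t ht => by
      rw [h0] at ht; exact AddSubgroup.mem_bot.1 ht
    rw [eq_bot_iff]
    intro x hx
    rw [AddSubgroup.mem_bot]
    funext i
    show x i = 0
    by_contra hne
    have hT : ∀ z : S, z ∈ annih S := by
      rcases hS.2 _ (annih_ideal S) with h | h
      · have := coord_annih hid i (h0 i) hx
        rw [h] at this
        exact absurd (AddSubgroup.mem_bot.1 this) hne
      · intro z; rw [h]; trivial
    by_cases hj : ∃ j, i ≠ j
    · obtain ⟨j, hij⟩ := hj
      apply hne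
      refine key j _ (mem_comp (I.add_mem (I.neg_mem hx) (aut_mem hI (transv_aut hT hij) hx)) ?_ ?_)
      · show -(x j) + (if j = j then x j + x i else x j) = x i
        simp
      · intro k hk
        show -(x k) + (if k = j then x k + x i else x k) = 0
        simp [hk]
    · push Not at hj
      exact hne (key i _ (mem_comp hx rfl fun k hk => absurd (hj k).symm hk))
end
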